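/- arXiv:1606.06935 — 5 statements merged into one kernel-verified Lean document; each statement's English description precedes it below -/
import Mathlib

section
/- Let w : ℕ → ℤ be an infinite sequence taking values in {-1, 1}. Then for every n ≥ 1, the abelian complexity of w satisfies ρ_w(n) = (M_w(n) − m_w(n))/2 + 1. -/
/-- The partial sum `Σ_w(i, n) = w(i) + w(i+1) + ⋯ + w(i+n−1)`. -/
def pSum (w : ℕ → ℤ) (i n : ℕ) : ℤ := ∑ j ∈ Finset.range n, w (i + j)

/-- The Parikh (abelianization) vector of the factor of `w` of length `n`
starting at position `i`: for each letter `a` it records the number of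
occurrences of `a` in that factor. -/
def parikh (w : ℕ → ℤ) (n i : ℕ) : ℤ → ℕ :=
  fun a => ((Finset.range n).filter fun j => w (i + j) = a).card

/-- The abelian complexity of `w`: the number of abelian equivalence classes
of factors of `w` of length `n`, i.e. the number of distinct Parikh vectors. -/
noncomputable def abelianComplexity (w : ℕ → ℤ) (n : ℕ) : ℕ :=
  (Set.range (parikh w n)).ncard

/-!
Over a two-letter alphabet `{a, b}`, the number of `a`'s in a factor of length `n` determines its
Parikh vector. Sliding the window by one position changes that number by at most one, so the numbers
that occur form an interval and the abelian complexity is the number of integers in it. If `b < a`,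
the sum of the letters is an increasing affine function of the number of `a`'s with slope `a - b`.
-/

open Set

theorem ordConnected_range_of_le_succ {α : Type*} [LinearOrder α] [SuccOrder α] {f : ℕ → α}
    (hup : ∀ i, f (i + 1) ≤ Order.succ (f i)) (hdown : ∀ i, f i ≤ Order.succ (f (i + 1))) :
    (range f).OrdConnected := by
  refine ordConnected_of_Ioo ?_
  rintro _ ⟨p, rfl⟩ _ ⟨q, rfl⟩ - k ⟨hpk, hkq⟩
  by_contra hk
  have hne (i : ℕ) : f i ≠ k := fun h => hk ⟨i, h⟩
  -- A sequence that skips `k` can never cross it.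
  have lt_succ_iff (i : ℕ) : f (i + 1) < k ↔ f i < k :=
    ⟨fun h => ((hdown i).trans (Order.succ_le_of_lt h)).lt_of_ne (hne i),
      fun h => ((hup i).trans (Order.succ_le_of_lt h)).lt_of_ne (hne (i + 1))⟩
  have lt_iff_zero (i : ℕ) : f i < k ↔ f 0 < k := by
    induction i with
    | zero => rfl
    | succ i ih => exact (lt_succ_iff i).trans ih
  exact hkq.not_gt ((lt_iff_zero q).2 ((lt_iff_zero p).1 hpk))

theorem eq_Icc_of_isLeast_of_isGreatest {α : Type*} [Preorder α] {s : Set α} {k K : α}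
    (hs : s.OrdConnected) (hk : IsLeast s k) (hK : IsGreatest s K) : s = Icc k K :=
  Subset.antisymm (fun _ hx => ⟨hk.2 hx, hK.2 hx⟩) (hs.out hk.1 hK.1)

theorem parikh_add_one_add_ite (w : ℕ → ℤ) (n i : ℕ) (c : ℤ) :
    parikh w n (i + 1) c + (if w i = c then 1 else 0) =
      parikh w n i c + (if w (i + n) = c then 1 else 0) := by
  have hindex (j : ℕ) : i + 1 + j = i + (j + 1) := by ring
  simp only [parikh, Finset.card_filter, hindex]
  exact (Finset.sum_range_succ' (fun j => if w (i + j) = c then 1 else 0) n).symm.trans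
    (Finset.sum_range_succ _ n)

theorem ordConnected_range_parikh (w : ℕ → ℤ) (n : ℕ) (c : ℤ) :
    (range fun i => parikh w n i c).OrdConnected := by
  refine ordConnected_range_of_le_succ (fun i => ?_) (fun i => ?_) <;>
  · have hslide := parikh_add_one_add_ite w n i c
    rw [Nat.succ_eq_succ]
    split_ifs at hslide <;> omega

section BinaryWord

variable {w : ℕ → ℤ} {a b : ℤ}

theorem parikh_add_parikh (hab : a ≠ b) (hw : ∀ k, w k = a ∨ w k = b) (n i : ℕ) :
    parikh w n i a + parikh w n i b = n := by
  have hnot (k : ℕ) : w k = b ↔ ¬w k = a :=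
    ⟨fun h h' => hab (h'.symm.trans h), (hw k).resolve_left⟩
  simp only [parikh, hnot, Finset.card_filter_add_card_filter_not, Finset.card_range]

theorem parikh_eq_parikh_iff (hw : ∀ k, w k = a ∨ w k = b) {n i j : ℕ} :
    parikh w n i = parikh w n j ↔ parikh w n i a = parikh w n j a := by
  refine ⟨fun h => congrFun h a, fun h => funext fun c => ?_⟩
  rcases eq_or_ne c a with rfl | hca
  · exact h
  rcases eq_or_ne c b with rfl | hcb
  · have hi := parikh_add_parikh hca.symm hw n i
    have hj := parikh_add_parikh hca.symm hw n j
    omega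
  · have hne (k : ℕ) : w k ≠ c := by
      rcases hw k with hk | hk <;> rw [hk]
      exacts [hca.symm, hcb.symm]
    simp [parikh, hne]

theorem abelianComplexity_eq_ncard_range (hw : ∀ k, w k = a ∨ w k = b) (n : ℕ) :
    abelianComplexity w n = (range fun i => parikh w n i a).ncard := by
  have hinj : InjOn (fun v : ℤ → ℕ => v a) (range (parikh w n)) := by
    rintro _ ⟨i, rfl⟩ _ ⟨j, rfl⟩ h
    exact (parikh_eq_parikh_iff hw).2 h
  rw [abelianComplexity, ← hinj.ncard_image, ← range_comp]
  rfl

theorem abelianComplexity_eq_of_isLeast_of_isGreatest_parikh (hw : ∀ k, w k = a ∨ w k = b)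
    {n k K : ℕ} (hk : IsLeast (range fun i => parikh w n i a) k)
    (hK : IsGreatest (range fun i => parikh w n i a) K) :
    (abelianComplexity w n : ℤ) = K - k + 1 := by
  have hkK : k ≤ K := hk.2 hK.1
  rw [abelianComplexity_eq_ncard_range hw,
    eq_Icc_of_isLeast_of_isGreatest (ordConnected_range_parikh w n a) hk hK, ← Finset.coe_Icc,
    ncard_coe_finset, Nat.card_Icc]
  omega

theorem pSum_eq_mul_parikh_add (hw : ∀ k, w k = a ∨ w k = b) (i n : ℕ) :
    pSum w i n = (a - b) * parikh w n i a + n * b := by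
  have hletter (k : ℕ) : w k = (a - b) * (if w k = a then 1 else 0) + b := by
    split_ifs with hk
    · rw [hk]; ring
    · rw [(hw k).resolve_left hk]; ring
  calc pSum w i n = ∑ j ∈ Finset.range n, ((a - b) * (if w (i + j) = a then 1 else 0) + b) :=
        Finset.sum_congr rfl fun j _ => hletter (i + j)
    _ = (a - b) * parikh w n i a + n * b := by
        rw [Finset.sum_add_distrib, ← Finset.mul_sum, parikh, Finset.natCast_card_filter,
          Finset.sum_const, Finset.card_range, nsmul_eq_mul]

theorem pSum_le_pSum_iff (hab : b < a) (hw : ∀ k, w k = a ∨ w k = b) {i j n : ℕ} :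
    pSum w i n ≤ pSum w j n ↔ parikh w n i a ≤ parikh w n j a := by
  rw [pSum_eq_mul_parikh_add hw, pSum_eq_mul_parikh_add hw, add_le_add_iff_right,
    mul_le_mul_iff_right₀ (sub_pos.2 hab), Nat.cast_le]

theorem abelianComplexity_eq_max_sub_min_general (hab : b < a) (hw : ∀ k, w k = a ∨ w k = b)
    {n : ℕ} {M m : ℤ} (hM : IsGreatest (range fun i => pSum w i n) M)
    (hm : IsLeast (range fun i => pSum w i n) m) :
    (abelianComplexity w n : ℤ) = (M - m) / (a - b) + 1 := by
  obtain ⟨⟨p, rfl⟩, hp⟩ := hM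
  obtain ⟨⟨q, rfl⟩, hq⟩ := hm
  have hmax : IsGreatest (range fun i => parikh w n i a) (parikh w n p a) :=
    ⟨mem_range_self p, forall_mem_range.2 fun i =>
      (pSum_le_pSum_iff hab hw).1 (hp (mem_range_self i))⟩
  have hmin : IsLeast (range fun i => parikh w n i a) (parikh w n q a) :=
    ⟨mem_range_self q, forall_mem_range.2 fun i =>
      (pSum_le_pSum_iff hab hw).1 (hq (mem_range_self i))⟩
  simp only [pSum_eq_mul_parikh_add hw]
  rw [abelianComplexity_eq_of_isLeast_of_isGreatest_parikh hw hmin hmax,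
    add_sub_add_right_eq_sub, ← mul_sub,
    Int.mul_ediv_cancel_left _ (sub_ne_zero.2 hab.ne')]

end BinaryWord

/-- For a sequence `w` with values in `{-1, 1}`, with
`M_w(n) = max_{i ≥ 0} Σ_w(i,n)` and `m_w(n) = min_{i ≥ 0} Σ_w(i,n)`, the
abelian complexity satisfies `ρ_w(n) = (M_w(n) − m_w(n))/2 + 1` for `n ≥ 1`. -/
theorem abelianComplexity_eq_max_sub_min
    (w : ℕ → ℤ) (hw : ∀ n, w n = 1 ∨ w n = -1)
    (M m : ℕ → ℤ)
    (hM : ∀ n, IsGreatest (Set.range fun i => pSum w i n) (M n))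
    (hm : ∀ n, IsLeast (Set.range fun i => pSum w i n) (m n))
    (n : ℕ) (hn : 1 ≤ n) :
    (abelianComplexity w n : ℤ) = (M n - m n) / 2 + 1 :=
  abelianComplexity_eq_max_sub_min_general (by norm_num) hw (hM n) (hm n)
end

section
/- For every n ≥ 1, M_r(n) + m_r(n) = 0 and M_{r'}(n) + m_{r'}(n) = 0. -/
/-! In binary, the recurrence says that each pair of adjacent ones contributes a factor `-1` to `r`.
Prepending the digits of `a`, with a separating `0`, to a word for `j` therefore multiplies `r j` by
`r a`. As `r 3 = -1`, every prefix of `r` occurs again, negated, at an even position, and since the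
position is even the same holds for `r'`. Window sums of a fixed length thus form a set that is
symmetric about `0`. -/

section Recurrence

variable {R : Type*} [Monoid R] [HasDistribNeg R] {r : ℕ → R}

theorem rudinShapiro_mul_two_pow_add (hr0 : r 0 = 1) (hre : ∀ n, r (2 * n) = r n)
    (hro : ∀ n, r (2 * n + 1) = (-1) ^ n * r n) (a : ℕ) {k j : ℕ} (hj : j < 2 ^ k) :
    r (a * 2 ^ (k + 1) + j) = r a * r j := by
  induction k generalizing j with
  | zero =>
    obtain rfl : j = 0 := by simpa using hj
    rw [hr0, mul_one, add_zero, zero_add, pow_one, mul_comm, hre]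
  | succ k ih =>
    obtain ⟨i, rfl | rfl⟩ := j.even_or_odd'
    · have split : a * 2 ^ (k + 1 + 1) + 2 * i = 2 * (a * 2 ^ (k + 1) + i) := by ring
      rw [split, hre, hre, ih (by lia)]
    · have split : a * 2 ^ (k + 1 + 1) + (2 * i + 1) = 2 * (a * 2 ^ (k + 1) + i) + 1 := by ring
      have sign : (-1 : R) ^ (a * 2 ^ (k + 1) + i) = (-1) ^ i := by
        rw [pow_add, (even_two.pow_of_ne_zero k.succ_ne_zero |>.mul_left a).neg_one_pow, one_mul]
      rw [split, hro, hro, ih (by lia), sign]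
      exact ((Commute.neg_one_left (r a)).pow_left i).left_comm (r i)

theorem rudinShapiro_three (hr0 : r 0 = 1) (hro : ∀ n, r (2 * n + 1) = (-1) ^ n * r n) :
    r 3 = -1 := by
  have hr1 : r 1 = 1 := by simpa [hr0] using hro 0
  simpa [hr1] using hro 1

theorem exists_even_rudinShapiro_add_eq_neg (hr0 : r 0 = 1) (hre : ∀ n, r (2 * n) = r n)
    (hro : ∀ n, r (2 * n + 1) = (-1) ^ n * r n) (N : ℕ) :
    ∃ p, Even p ∧ ∀ j < N, r (p + j) = -r j := by
  refine ⟨3 * 2 ^ (N + 1), (even_two.pow_of_ne_zero N.succ_ne_zero).mul_left 3, fun j hj => ?_⟩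
  rw [rudinShapiro_mul_two_pow_add hr0 hre hro 3 (hj.trans Nat.lt_two_pow_self),
    rudinShapiro_three hr0 hro, neg_one_mul]

theorem neg_one_pow_mul_add_eq_neg {p j : ℕ} (hp : Even p) (h : r (p + j) = -r j) :
    (-1) ^ (p + j) * r (p + j) = -((-1) ^ j * r j) := by
  rw [h, pow_add, hp.neg_one_pow, one_mul, mul_neg]

end Recurrence

/-- Every prefix of `w` occurs again in `w` with all signs reversed. Prefixes suffice, because
each block of consecutive terms lies in a prefix. -/
def NegRecurrent {R : Type*} [Neg R] (w : ℕ → R) : Prop :=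
  ∀ N, ∃ p, ∀ j < N, w (p + j) = -w j

theorem pSum_add_eq_neg {w : ℕ → ℤ} {p i n : ℕ} (h : ∀ j < i + n, w (p + j) = -w j) :
    pSum w (p + i) n = -pSum w i n := by
  simp only [pSum, ← Finset.sum_neg_distrib]
  refine Finset.sum_congr rfl fun j hj => ?_
  rw [add_assoc, h _ (Nat.add_lt_add_left (Finset.mem_range.mp hj) i)]

theorem NegRecurrent.neg_mem_range_pSum {w : ℕ → ℤ} (hw : NegRecurrent w) {n : ℕ} {s : ℤ}
    (hs : s ∈ Set.range (pSum w · n)) : -s ∈ Set.range (pSum w · n) := by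
  obtain ⟨i, rfl⟩ := hs
  obtain ⟨p, hp⟩ := hw (i + n)
  exact ⟨p + i, pSum_add_eq_neg hp⟩

theorem isGreatest_add_isLeast_eq_zero {G : Type*} [AddGroup G] [PartialOrder G] [AddLeftMono G]
    [AddRightMono G] {S : Set G} (hS : ∀ s ∈ S, -s ∈ S) {M m : G} (hM : IsGreatest S M)
    (hm : IsLeast S m) : M + m = 0 := by
  have neg_m_le : -m ≤ M := hM.2 (hS m hm.1)
  have le_neg_M : m ≤ -M := hm.2 (hS M hM.1)
  exact eq_neg_iff_add_eq_zero.mp (le_antisymm (le_neg_of_le_neg le_neg_M) neg_m_le)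

/-- For the Rudin–Shapiro sequence `r` (defined by
`r(0) = 1`, `r(2n) = r(n)`, `r(2n+1) = (−1)^n r(n)`) and the related sequence
`r'(n) = (−1)^n r(n)`, one has `M_r(n) + m_r(n) = 0` and
`M_{r'}(n) + m_{r'}(n) = 0` for all `n ≥ 1`, where `M_w(n)` and `m_w(n)` are
the maximal and minimal sums of `n` consecutive terms of `w`. -/
theorem max_add_min_eq_zero
    (r : ℕ → ℤ) (hr0 : r 0 = 1)
    (hre : ∀ n, r (2 * n) = r n)
    (hro : ∀ n, r (2 * n + 1) = (-1) ^ n * r n)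
    (M m M' m' : ℕ → ℤ)
    (hM : ∀ n, IsGreatest (Set.range fun i => pSum r i n) (M n))
    (hm : ∀ n, IsLeast (Set.range fun i => pSum r i n) (m n))
    (hM' : ∀ n, IsGreatest (Set.range fun i => pSum (fun k => (-1) ^ k * r k) i n) (M' n))
    (hm' : ∀ n, IsLeast (Set.range fun i => pSum (fun k => (-1) ^ k * r k) i n) (m' n))
    (n : ℕ) (hn : 1 ≤ n) :
    M n + m n = 0 ∧ M' n + m' n = 0 := by
  have flip := exists_even_rudinShapiro_add_eq_neg hr0 hre hro
  have hr : NegRecurrent r := fun N =>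
    let ⟨p, _, h⟩ := flip N
    ⟨p, h⟩
  have hr' : NegRecurrent fun k => (-1) ^ k * r k := fun N =>
    let ⟨p, hp, h⟩ := flip N
    ⟨p, fun j hj => neg_one_pow_mul_add_eq_neg hp (h j hj)⟩
  exact ⟨isGreatest_add_isLeast_eq_zero (fun _ => hr.neg_mem_range_pSum) (hM n) (hm n),
    isGreatest_add_isLeast_eq_zero (fun _ => hr'.neg_mem_range_pSum) (hM' n) (hm' n)⟩
end

section
/- For all n ≥ 1 and i ≥ 0, the partial sums Σ(i, n) := Σ_r(i, n) of the Rudin-Shapiro sequence satisfy: Σ(4i, 4n) = 2Σ(i, n); Σ(4i+1, 4n) = Σ(i, n) + Σ(i+1, n); Σ(4i+2, 4n) = 2Σ(i+1, n); Σ(4i+3, 4n) = 2Σ(i+1, n) − r(4i+4n+3) + r(4i+3); Σ(4i, 4n+1) = 2Σ(i, n) + r(i+n); Σ(4i+1, 4n+1) = 2Σ(i+1, n) + r(i); Σ(4i+2, 4n+1) = 2Σ(i+1, n) + r(4i+4n+2); Σ(4i+3, 4n+1) = 2Σ(i+1, n) + r(4i+3). -/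
/-!
Cut the range of summation into `n` blocks of four consecutive terms. As `r (4m) = r (4m+1) = r m`
and `r (4m+2) + r (4m+3) = 0`, the block starting at `4m + a` sums to `2 r m`, `r m + r (m+1)`,
`2 r (m+1)` for `a = 0, 1, 2`. For `a = 3` the window is the one for `a = 2` moved by one step,
which only exchanges its end terms.
-/

section PSum

variable (w : ℕ → ℤ) (i m n : ℕ)

theorem pSum_add_right : pSum w i (m + n) = pSum w i m + pSum w (i + m) n := by
  simp only [pSum, Finset.sum_range_add, add_assoc]

theorem pSum_one : pSum w i 1 = w i :=
  Finset.sum_range_one _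

theorem pSum_add_one_right : pSum w i (n + 1) = pSum w i n + w (i + n) :=
  Finset.sum_range_succ _ _

theorem add_pSum_add_one_left : w i + pSum w (i + 1) n = pSum w i n + w (i + n) := by
  rw [← pSum_add_one_right, add_comm n 1, pSum_add_right, pSum_one]

theorem pSum_comp_add_right (a : ℕ) : pSum (fun m ↦ w (m + a)) i n = pSum w (i + a) n := by
  simp only [pSum, add_right_comm]

theorem pSum_mul_add_mul (k a : ℕ) :
    pSum w (k * i + a) (k * n) = pSum (fun m ↦ pSum w (k * m + a) k) i n := by
  induction n with
  | zero => rfl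
  | succ n ih =>
    have block_start : k * i + a + k * n = k * (i + n) + a := by ring
    rw [mul_add_one, pSum_add_right, ih, block_start, pSum_add_one_right]

theorem pSum_four : pSum w i 4 = w i + w (i + 1) + w (i + 2) + w (i + 3) := by
  simp only [pSum, Finset.sum_range_succ, Finset.sum_range_zero, zero_add, add_zero]

end PSum

/-- The defining recursion of the Rudin–Shapiro sequence. The initial value is left free, so the
solutions are the scalar multiples of that sequence. -/
structure IsRudinShapiroRec {R : Type*} [Ring R] (r : ℕ → R) : Prop where
  two_mul : ∀ n, r (2 * n) = r n
  two_mul_add_one : ∀ n, r (2 * n + 1) = (-1) ^ n * r n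

namespace IsRudinShapiroRec

section Ring

variable {R : Type*} [Ring R] {r : ℕ → R} (h : IsRudinShapiroRec r) (m : ℕ)
include h

theorem four_mul : r (4 * m) = r m := by
  rw [show 4 * m = 2 * (2 * m) by ring, h.two_mul, h.two_mul]

theorem four_mul_add_one : r (4 * m + 1) = r m := by
  rw [show 4 * m + 1 = 2 * (2 * m) + 1 by ring, h.two_mul_add_one, h.two_mul,
    (even_two_mul m).neg_one_pow, one_mul]

theorem four_mul_add_three : r (4 * m + 3) = -r (4 * m + 2) := by
  rw [show 4 * m + 3 = 2 * (2 * m + 1) + 1 by ring, show 4 * m + 2 = 2 * (2 * m + 1) by ring,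
    h.two_mul_add_one, h.two_mul, (odd_two_mul_add_one m).neg_one_pow, neg_one_mul]

end Ring

variable {r : ℕ → ℤ} (h : IsRudinShapiroRec r) (i n : ℕ)
include h

theorem pSum_four_mul_four_mul : pSum r (4 * i) (4 * n) = 2 * pSum r i n := by
  have block (m : ℕ) : pSum r (4 * m + 0) 4 = 2 * r m := by
    rw [pSum_four]
    linear_combination h.four_mul m + h.four_mul_add_one m + h.four_mul_add_three m
  calc pSum r (4 * i + 0) (4 * n)
    _ = pSum (fun m ↦ 2 * r m) i n := by simp only [pSum_mul_add_mul, block]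
    _ = 2 * pSum r i n := (Finset.mul_sum ..).symm

theorem pSum_four_mul_add_one_four_mul :
    pSum r (4 * i + 1) (4 * n) = pSum r i n + pSum r (i + 1) n := by
  have block (m : ℕ) : pSum r (4 * m + 1) 4 = r m + r (m + 1) := by
    rw [pSum_four]
    linear_combination h.four_mul_add_one m + h.four_mul_add_three m + h.four_mul (m + 1)
  calc pSum r (4 * i + 1) (4 * n)
    _ = pSum (fun m ↦ r m + r (m + 1)) i n := by simp only [pSum_mul_add_mul, block]
    _ = pSum r i n + pSum (fun m ↦ r (m + 1)) i n := Finset.sum_add_distrib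
    _ = pSum r i n + pSum r (i + 1) n := by rw [pSum_comp_add_right]

theorem pSum_four_mul_add_two_four_mul : pSum r (4 * i + 2) (4 * n) = 2 * pSum r (i + 1) n := by
  have block (m : ℕ) : pSum r (4 * m + 2) 4 = 2 * r (m + 1) := by
    rw [pSum_four]
    linear_combination h.four_mul_add_three m + h.four_mul (m + 1) + h.four_mul_add_one (m + 1)
  calc pSum r (4 * i + 2) (4 * n)
    _ = pSum (fun m ↦ 2 * r (m + 1)) i n := by simp only [pSum_mul_add_mul, block]
    _ = 2 * pSum (fun m ↦ r (m + 1)) i n := (Finset.mul_sum ..).symm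
    _ = 2 * pSum r (i + 1) n := by rw [pSum_comp_add_right]

theorem pSum_four_mul_add_three_four_mul :
    pSum r (4 * i + 3) (4 * n) =
      2 * pSum r (i + 1) n - r (4 * i + 4 * n + 3) + r (4 * i + 3) := by
  have shift := add_pSum_add_one_left r (4 * i + 2) (4 * n)
  rw [h.pSum_four_mul_add_two_four_mul, add_right_comm _ 2 (4 * n)] at shift
  have last : r (4 * i + 4 * n + 3) = -r (4 * i + 4 * n + 2) := by
    rw [← mul_add, h.four_mul_add_three]
  linear_combination shift - h.four_mul_add_three i + last

theorem pSum_four_mul_four_mul_add_one :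
    pSum r (4 * i) (4 * n + 1) = 2 * pSum r i n + r (i + n) := by
  rw [pSum_add_one_right, h.pSum_four_mul_four_mul, ← mul_add, h.four_mul]

theorem pSum_four_mul_add_one_four_mul_add_one :
    pSum r (4 * i + 1) (4 * n + 1) = 2 * pSum r (i + 1) n + r i := by
  rw [pSum_add_one_right, h.pSum_four_mul_add_one_four_mul, add_right_comm (4 * i), ← mul_add,
    h.four_mul_add_one]
  linear_combination -add_pSum_add_one_left r i n

theorem pSum_four_mul_add_two_four_mul_add_one :
    pSum r (4 * i + 2) (4 * n + 1) = 2 * pSum r (i + 1) n + r (4 * i + 4 * n + 2) := by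
  rw [pSum_add_one_right, h.pSum_four_mul_add_two_four_mul, add_right_comm (4 * i)]

theorem pSum_four_mul_add_three_four_mul_add_one :
    pSum r (4 * i + 3) (4 * n + 1) = 2 * pSum r (i + 1) n + r (4 * i + 3) := by
  rw [pSum_add_one_right, h.pSum_four_mul_add_three_four_mul, add_right_comm (4 * i)]
  ring

end IsRudinShapiroRec

/-- Recurrence relations for the partial sums
`Σ(i, n) = Σ_r(i, n)` of the Rudin–Shapiro sequence (first eight cases:
lengths `4n` and `4n+1`). -/
theorem pSum_rudinShapiro_four_n_and_four_n_add_one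
    (r : ℕ → ℤ) (hr0 : r 0 = 1)
    (hre : ∀ n, r (2 * n) = r n)
    (hro : ∀ n, r (2 * n + 1) = (-1) ^ n * r n)
    (n i : ℕ) (hn : 1 ≤ n) :
    pSum r (4 * i) (4 * n) = 2 * pSum r i n ∧
    pSum r (4 * i + 1) (4 * n) = pSum r i n + pSum r (i + 1) n ∧
    pSum r (4 * i + 2) (4 * n) = 2 * pSum r (i + 1) n ∧
    pSum r (4 * i + 3) (4 * n) =
      2 * pSum r (i + 1) n - r (4 * i + 4 * n + 3) + r (4 * i + 3) ∧
    pSum r (4 * i) (4 * n + 1) = 2 * pSum r i n + r (i + n) ∧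
    pSum r (4 * i + 1) (4 * n + 1) = 2 * pSum r (i + 1) n + r i ∧
    pSum r (4 * i + 2) (4 * n + 1) = 2 * pSum r (i + 1) n + r (4 * i + 4 * n + 2) ∧
    pSum r (4 * i + 3) (4 * n + 1) = 2 * pSum r (i + 1) n + r (4 * i + 3) := by
  have h : IsRudinShapiroRec r := ⟨hre, hro⟩
  exact ⟨h.pSum_four_mul_four_mul i n, h.pSum_four_mul_add_one_four_mul i n,
    h.pSum_four_mul_add_two_four_mul i n, h.pSum_four_mul_add_three_four_mul i n,
    h.pSum_four_mul_four_mul_add_one i n, h.pSum_four_mul_add_one_four_mul_add_one i n,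
    h.pSum_four_mul_add_two_four_mul_add_one i n,
    h.pSum_four_mul_add_three_four_mul_add_one i n⟩
end

section
/- For all n ≥ 1 and i ≥ 0, the partial sums Σ(i, n) := Σ_r(i, n) of the Rudin-Shapiro sequence satisfy: Σ(4i, 4n+2) = Σ(i, n) + Σ(i, n+1) + r(i+n); Σ(4i+1, 4n+2) = Σ(i+1, n) + Σ(i, n+1) + r(4i+4n+2); Σ(4i+2, 4n+2) = Σ(i+1, n) + Σ(i+1, n+1) − r(i+n+1); Σ(4i+3, 4n+2) = Σ(i+1, n) + Σ(i+1, n+1) + r(4i+3); Σ(4i, 4n+3) = 2Σ(i, n+1) − r(4i+4n+3); Σ(4i+1, 4n+3) = 2Σ(i, n+1) − r(i); Σ(4i+2, 4n+3) = 2Σ(i+1, n+1) − r(i+n+1); Σ(4i+3, 4n+3) = 2Σ(i+1, n+1) + r(4i+3). -/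
/-!
Cut the sequence into blocks `r(4m), r(4m+1), r(4m+2), r(4m+3)` of length four. The first two terms
of a block equal `r(m)` and the last two cancel, so a block sums to `2 r(m)`, and a window made of
whole blocks satisfies `Σ(4i, 4n) = 2 Σ(i, n)`. Any other window differs from such a window by a few
terms at each end, all of which are known up to a cancelling pair.
-/

theorem pSum_succ (w : ℕ → ℤ) (i n : ℕ) : pSum w i (n + 1) = pSum w i n + w (i + n) :=
  Finset.sum_range_succ _ _

theorem pSum_succ_left (w : ℕ → ℤ) (i n : ℕ) : pSum w i (n + 1) = w i + pSum w (i + 1) n := by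
  simp only [pSum, Finset.sum_range_succ', add_zero, add_comm, add_left_comm]

theorem pSum_four_mul_add_three (w : ℕ → ℤ) (i n : ℕ) :
    pSum w (4 * i + 3) (n + 1) = w (4 * i + 3) + pSum w (4 * (i + 1)) n :=
  pSum_succ_left w (4 * i + 3) n

/-- The property of the Rudin–Shapiro sequence that governs its partial sums: the `m`-th block of
length four is `w m, w m, c, -c`, where `c = w (4 * m + 2)` is left free. -/
structure HasRudinShapiroBlocks (w : ℕ → ℤ) : Prop where
  four_mul (m : ℕ) : w (4 * m) = w m
  four_mul_add_one (m : ℕ) : w (4 * m + 1) = w m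
  four_mul_add_three (m : ℕ) : w (4 * m + 3) = -w (4 * m + 2)

namespace HasRudinShapiroBlocks

theorem of_recurrence {r : ℕ → ℤ} (hre : ∀ n, r (2 * n) = r n)
    (hro : ∀ n, r (2 * n + 1) = (-1) ^ n * r n) : HasRudinShapiroBlocks r where
  four_mul m := by
    rw [show 4 * m = 2 * (2 * m) by ring, hre, hre]
  four_mul_add_one m := by
    rw [show 4 * m + 1 = 2 * (2 * m) + 1 by ring, hro, hre, (even_two_mul m).neg_one_pow, one_mul]
  four_mul_add_three m := by
    rw [show 4 * m + 3 = 2 * (2 * m + 1) + 1 by ring, hro, (odd_two_mul_add_one m).neg_one_pow,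
      neg_one_mul, show 4 * m + 2 = 2 * (2 * m + 1) by ring, hre]

variable {w : ℕ → ℤ} (hw : HasRudinShapiroBlocks w)
include hw

theorem pSum_four_mul_add_one (i n : ℕ) :
    pSum w (4 * i + 1) n = pSum w (4 * i) (n + 1) - w i := by
  rw [pSum_succ_left, hw.four_mul, add_sub_cancel_left]

theorem pSum_four_mul_add_two (i n : ℕ) :
    pSum w (4 * i + 2) (n + 2) = pSum w (4 * (i + 1)) n := by
  rw [pSum_succ_left, pSum_succ_left, hw.four_mul_add_three, add_neg_cancel_left, mul_add_one]

theorem pSum_four_mul_four_mul (i n : ℕ) : pSum w (4 * i) (4 * n) = 2 * pSum w i n := by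
  induction n with
  | zero => simp [pSum]
  | succ n ih =>
    simp only [mul_add_one, pSum_succ, ih, ← add_assoc, ← mul_add,
      hw.four_mul, hw.four_mul_add_one, hw.four_mul_add_three]
    ring

theorem pSum_four_mul_four_mul_add_one (i n : ℕ) :
    pSum w (4 * i) (4 * n + 1) = 2 * pSum w i n + w (i + n) := by
  rw [pSum_succ, hw.pSum_four_mul_four_mul, ← mul_add, hw.four_mul]

theorem pSum_four_mul_four_mul_add_two (i n : ℕ) :
    pSum w (4 * i) (4 * n + 2) = 2 * pSum w i (n + 1) := by
  rw [pSum_succ, hw.pSum_four_mul_four_mul_add_one, ← add_assoc, ← mul_add, hw.four_mul_add_one,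
    pSum_succ]
  ring

theorem pSum_four_mul_four_mul_add_three (i n : ℕ) :
    pSum w (4 * i) (4 * n + 3) = 2 * pSum w i (n + 1) - w (4 * i + 4 * n + 3) := by
  rw [pSum_succ, hw.pSum_four_mul_four_mul_add_two, ← add_assoc, ← mul_add,
    hw.four_mul_add_three, sub_neg_eq_add]

end HasRudinShapiroBlocks

theorem pSum_rudinShapiro_four_n_add_two_and_three_general
    {w : ℕ → ℤ} (hw : HasRudinShapiroBlocks w) (n i : ℕ) :
    pSum w (4 * i) (4 * n + 2) = pSum w i n + pSum w i (n + 1) + w (i + n) ∧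
    pSum w (4 * i + 1) (4 * n + 2) =
      pSum w (i + 1) n + pSum w i (n + 1) + w (4 * i + 4 * n + 2) ∧
    pSum w (4 * i + 2) (4 * n + 2) =
      pSum w (i + 1) n + pSum w (i + 1) (n + 1) - w (i + n + 1) ∧
    pSum w (4 * i + 3) (4 * n + 2) =
      pSum w (i + 1) n + pSum w (i + 1) (n + 1) + w (4 * i + 3) ∧
    pSum w (4 * i) (4 * n + 3) = 2 * pSum w i (n + 1) - w (4 * i + 4 * n + 3) ∧
    pSum w (4 * i + 1) (4 * n + 3) = 2 * pSum w i (n + 1) - w i ∧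
    pSum w (4 * i + 2) (4 * n + 3) = 2 * pSum w (i + 1) (n + 1) - w (i + n + 1) ∧
    pSum w (4 * i + 3) (4 * n + 3) = 2 * pSum w (i + 1) (n + 1) + w (4 * i + 3) := by
  have hfirst := pSum_succ_left w i n
  have hlast := pSum_succ w i n
  have hlast_shift : pSum w (i + 1) (n + 1) = pSum w (i + 1) n + w (i + n + 1) := by
    rw [pSum_succ, Nat.add_right_comm]
  have hpair : w (4 * i + 4 * n + 3) = -w (4 * i + 4 * n + 2) := by
    rw [← mul_add, hw.four_mul_add_three]
  refine ⟨?_, ?_, ?_, ?_, ?_, ?_, ?_, ?_⟩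
  · rw [hw.pSum_four_mul_four_mul_add_two]
    linarith only [hlast]
  · rw [hw.pSum_four_mul_add_one, hw.pSum_four_mul_four_mul_add_three]
    linarith only [hfirst, hpair]
  · rw [hw.pSum_four_mul_add_two, hw.pSum_four_mul_four_mul]
    linarith only [hlast_shift]
  · rw [pSum_four_mul_add_three, hw.pSum_four_mul_four_mul_add_one, Nat.add_right_comm]
    linarith only [hlast_shift]
  · exact hw.pSum_four_mul_four_mul_add_three i n
  · rw [hw.pSum_four_mul_add_one, show 4 * n + 3 + 1 = 4 * (n + 1) by ring,
      hw.pSum_four_mul_four_mul]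
  · rw [hw.pSum_four_mul_add_two, hw.pSum_four_mul_four_mul_add_one, Nat.add_right_comm]
    linarith only [hlast_shift]
  · rw [pSum_four_mul_add_three, hw.pSum_four_mul_four_mul_add_two, add_comm]

/-- Recurrence relations for the partial sums
`Σ(i, n) = Σ_r(i, n)` of the Rudin–Shapiro sequence (last eight cases:
lengths `4n+2` and `4n+3`). -/
theorem pSum_rudinShapiro_four_n_add_two_and_three
    (r : ℕ → ℤ) (hr0 : r 0 = 1)
    (hre : ∀ n, r (2 * n) = r n)
    (hro : ∀ n, r (2 * n + 1) = (-1) ^ n * r n)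
    (n i : ℕ) (hn : 1 ≤ n) :
    pSum r (4 * i) (4 * n + 2) = pSum r i n + pSum r i (n + 1) + r (i + n) ∧
    pSum r (4 * i + 1) (4 * n + 2) =
      pSum r (i + 1) n + pSum r i (n + 1) + r (4 * i + 4 * n + 2) ∧
    pSum r (4 * i + 2) (4 * n + 2) =
      pSum r (i + 1) n + pSum r (i + 1) (n + 1) - r (i + n + 1) ∧
    pSum r (4 * i + 3) (4 * n + 2) =
      pSum r (i + 1) n + pSum r (i + 1) (n + 1) + r (4 * i + 3) ∧
    pSum r (4 * i) (4 * n + 3) = 2 * pSum r i (n + 1) - r (4 * i + 4 * n + 3) ∧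
    pSum r (4 * i + 1) (4 * n + 3) = 2 * pSum r i (n + 1) - r i ∧
    pSum r (4 * i + 2) (4 * n + 3) = 2 * pSum r (i + 1) (n + 1) - r (i + n + 1) ∧
    pSum r (4 * i + 3) (4 * n + 3) = 2 * pSum r (i + 1) (n + 1) + r (4 * i + 3) :=
  pSum_rudinShapiro_four_n_add_two_and_three_general (.of_recurrence hre hro) n i
end

section
/- For every n ≥ 1, M_r(n) = M_{r'}(n); denote this common value by M(n). Moreover M(1) = 1, M(2) = 2, M(3) = 3, and for every n ≥ 1: M(4n) = 2M(n) + 2, M(4n+1) = 2M(n) + 1, M(4n+2) = M(n) + M(n+1) + 1, and M(4n+3) = 2M(n+1) + 1. -/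
/-!
Write `P` for the prefix sums of `r`, so that a window sum is a difference of two values of `P`.
The recursion modulo 4 gives `P (4k) = 2 P k`, `P (4k+1) = P k + P (k+1)`,
`P (4k+2) = 2 P (k+1)` and `P (4k+3) = 2 P (k+1) + r' k`. A window of length `4n + b` thus has
a sum which is the sum of two window sums of length `n` or `n + 1` plus a boundary term, and this
gives the upper bounds. They are attained when some maximal shorter window has suitable values of
`r` and `r'` at its two ends. If such windows exist for the pair of lengths `(n, n + 1)`, then they
exist for each of the pairs `(m, m + 1)` with `4n + 1 ≤ m ≤ 4n + 4`, so induction starting from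
`n = 0` reaches all lengths.

The equality `M_r = M_{r'}` comes from `r (2 ^ (k+1) - 1 - n) = (-1) ^ k * r' n` for `n < 2 ^ k`:
every prefix of either sequence occurs reversed in the other one.
-/

/-! ### Prefix sums and maximal window sums -/

/-- The prefix sum `w 0 + ⋯ + w (k - 1)`; window sums are differences of these. -/
def prefixSum (w : ℕ → ℤ) (k : ℕ) : ℤ := ∑ j ∈ Finset.range k, w j

/-- `M n` is the largest sum of `n` consecutive terms of `w`, the paper's `M_w(n)`. It is a
relation because the maximum need not exist for an arbitrary integer sequence. -/
def IsMaxSum (w M : ℕ → ℤ) : Prop :=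
  ∀ n, IsGreatest (Set.range fun i => pSum w i n) (M n)

/-- Every prefix of `v` occurs in `u` in reverse order: `v (L - 1), …, v 0` are the terms of `u`
at the positions `N - L, …, N - 1`. -/
def PrefixesOccurReversed (v u : ℕ → ℤ) : Prop :=
  ∀ L, ∃ N, L ≤ N ∧ ∀ a b, a < L → a + b + 1 = N → u b = v a

theorem prefixSum_succ (w : ℕ → ℤ) (k : ℕ) : prefixSum w (k + 1) = prefixSum w k + w k :=
  Finset.sum_range_succ w k

theorem pSum_eq_prefixSum_sub (w : ℕ → ℤ) (i n : ℕ) :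
    pSum w i n = prefixSum w (i + n) - prefixSum w i := by
  rw [prefixSum, prefixSum, Finset.sum_range_add, pSum, add_sub_cancel_left]

theorem pSum_eq_of_reversed {u v : ℕ → ℤ} {i n N : ℕ} (hN : i + n ≤ N)
    (h : ∀ a b, a < i + n → a + b + 1 = N → u b = v a) :
    pSum u (N - (i + n)) n = pSum v i n := by
  rw [pSum, pSum, ← Finset.sum_range_reflect]
  refine Finset.sum_congr rfl fun j hj => ?_
  rw [Finset.mem_range] at hj
  apply h <;> omega

namespace IsMaxSum

variable {w M : ℕ → ℤ}

theorem prefixSum_sub_le (hM : IsMaxSum w M) {i j n : ℕ} (hij : i + n = j) :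
    prefixSum w j - prefixSum w i ≤ M n := by
  rw [← hij, ← pSum_eq_prefixSum_sub]
  exact (hM n).2 ⟨i, rfl⟩

theorem le_of_forall_prefixSum_sub_le (hM : IsMaxSum w M) {n : ℕ} {c : ℤ}
    (h : ∀ i, prefixSum w (i + n) - prefixSum w i ≤ c) : M n ≤ c := by
  obtain ⟨i, hi : pSum w i n = M n⟩ := (hM n).1
  rw [← hi, pSum_eq_prefixSum_sub]
  exact h i

theorem le_of_forall_residue_mod_four (hM : IsMaxSum w M) {n : ℕ} {c : ℤ}
    (h₀ : ∀ q, prefixSum w (4 * q + n) - prefixSum w (4 * q) ≤ c)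
    (h₁ : ∀ q, prefixSum w (4 * q + 1 + n) - prefixSum w (4 * q + 1) ≤ c)
    (h₂ : ∀ q, prefixSum w (4 * q + 2 + n) - prefixSum w (4 * q + 2) ≤ c)
    (h₃ : ∀ q, prefixSum w (4 * q + 3 + n) - prefixSum w (4 * q + 3) ≤ c) : M n ≤ c := by
  refine hM.le_of_forall_prefixSum_sub_le fun i => ?_
  obtain ⟨q, rfl | rfl | rfl | rfl⟩ :
      ∃ q, i = 4 * q ∨ i = 4 * q + 1 ∨ i = 4 * q + 2 ∨ i = 4 * q + 3 := ⟨i / 4, by omega⟩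
  exacts [h₀ q, h₁ q, h₂ q, h₃ q]

theorem map_zero (hM : IsMaxSum w M) : M 0 = 0 := by
  obtain ⟨i, hi⟩ := (hM 0).1
  rw [← hi]
  rfl

theorem map_one (hM : IsMaxSum w M) (hw : ∀ k, w k ≤ 1) {i : ℕ} (hi : w i = 1) : M 1 = 1 := by
  refine le_antisymm (hM.le_of_forall_prefixSum_sub_le fun k => ?_) ?_
  · rw [prefixSum_succ, add_sub_cancel_left]
    exact hw k
  · have hle := hM.prefixSum_sub_le (i := i) (n := 1) rfl
    rwa [prefixSum_succ, add_sub_cancel_left, hi] at hle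

theorem le_of_prefixesOccurReversed {u v Mu Mv : ℕ → ℤ} (hu : IsMaxSum u Mu) (hv : IsMaxSum v Mv)
    (h : PrefixesOccurReversed v u) (n : ℕ) : Mv n ≤ Mu n := by
  obtain ⟨i, hi⟩ := (hv n).1
  obtain ⟨N, hN, hrev⟩ := h (i + n)
  rw [← hi]
  exact (hu n).2 ⟨N - (i + n), pSum_eq_of_reversed hN hrev⟩

end IsMaxSum

/-! ### The Rudin–Shapiro sequence -/

/-- The sequence `w'` with `w' n = (-1) ^ n * w n`. -/
def alternate (w : ℕ → ℤ) (n : ℕ) : ℤ := (-1) ^ n * w n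

/-- `r` satisfies the defining recursion of the Rudin–Shapiro sequence. -/
structure IsRudinShapiro (r : ℕ → ℤ) : Prop where
  zero : r 0 = 1
  two_mul : ∀ n, r (2 * n) = r n
  two_mul_add_one : ∀ n, r (2 * n + 1) = alternate r n

theorem abs_alternate (w : ℕ → ℤ) (n : ℕ) : |alternate w n| = |w n| := by
  rw [alternate, abs_mul, abs_neg_one_pow, one_mul]

theorem neg_one_pow_eq_neg_of_odd_add {a b : ℕ} (h : Odd (a + b)) :
    (-1 : ℤ) ^ a = -(-1) ^ b := by
  rcases Nat.even_or_odd b with hb | hb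
  · rw [hb.neg_one_pow, (Nat.odd_add.1 h |>.2 hb).neg_one_pow]
  · rw [hb.neg_one_pow, (Nat.odd_add'.1 h |>.1 hb).neg_one_pow, neg_neg]

theorem odd_add_of_add_add_one_eq_two_pow {a b k : ℕ} (h : a + b + 1 = 2 ^ (k + 1)) :
    Odd (a + b) := by
  rw [pow_succ] at h
  exact ⟨2 ^ k - 1, by omega⟩

namespace IsRudinShapiro

variable {r : ℕ → ℤ}

theorem alternate_two_mul (hr : IsRudinShapiro r) (n : ℕ) : alternate r (2 * n) = r n := by
  rw [alternate, (even_two_mul n).neg_one_pow, one_mul, hr.two_mul]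

theorem alternate_two_mul_add_one (hr : IsRudinShapiro r) (n : ℕ) :
    alternate r (2 * n + 1) = -alternate r n := by
  rw [alternate, (odd_two_mul_add_one n).neg_one_pow, neg_one_mul, hr.two_mul_add_one]

theorem four_mul (hr : IsRudinShapiro r) (n : ℕ) : r (4 * n) = r n := by
  rw [show 4 * n = 2 * (2 * n) by ring, hr.two_mul, hr.two_mul]

theorem four_mul_add_one (hr : IsRudinShapiro r) (n : ℕ) : r (4 * n + 1) = r n := by
  rw [show 4 * n + 1 = 2 * (2 * n) + 1 by ring, hr.two_mul_add_one, hr.alternate_two_mul]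

theorem four_mul_add_two (hr : IsRudinShapiro r) (n : ℕ) : r (4 * n + 2) = alternate r n := by
  rw [show 4 * n + 2 = 2 * (2 * n + 1) by ring, hr.two_mul, hr.two_mul_add_one]

theorem four_mul_add_three (hr : IsRudinShapiro r) (n : ℕ) :
    r (4 * n + 3) = -alternate r n := by
  rw [show 4 * n + 3 = 2 * (2 * n + 1) + 1 by ring, hr.two_mul_add_one,
    hr.alternate_two_mul_add_one]

theorem alternate_four_mul (hr : IsRudinShapiro r) (n : ℕ) : alternate r (4 * n) = r n := by
  rw [show 4 * n = 2 * (2 * n) by ring, hr.alternate_two_mul, hr.two_mul]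

theorem alternate_four_mul_add_two (hr : IsRudinShapiro r) (n : ℕ) :
    alternate r (4 * n + 2) = alternate r n := by
  rw [show 4 * n + 2 = 2 * (2 * n + 1) by ring, hr.alternate_two_mul, hr.two_mul_add_one]

theorem alternate_four_mul_add_three (hr : IsRudinShapiro r) (n : ℕ) :
    alternate r (4 * n + 3) = alternate r n := by
  rw [show 4 * n + 3 = 2 * (2 * n + 1) + 1 by ring, hr.alternate_two_mul_add_one,
    hr.alternate_two_mul_add_one, neg_neg]

theorem abs_eq_one (hr : IsRudinShapiro r) (n : ℕ) : |r n| = 1 := by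
  induction n using Nat.strong_induction_on with
  | _ n ih =>
    obtain ⟨q, rfl | rfl⟩ := Nat.even_or_odd' n
    · rcases q.eq_zero_or_pos with rfl | hq
      · rw [mul_zero, hr.zero, abs_one]
      · rw [hr.two_mul, ih q (by omega)]
    · rw [hr.two_mul_add_one, abs_alternate, ih q (by omega)]

theorem le_one (hr : IsRudinShapiro r) (n : ℕ) : r n ≤ 1 :=
  (abs_le.1 (hr.abs_eq_one n).le).2

theorem neg_one_le (hr : IsRudinShapiro r) (n : ℕ) : -1 ≤ r n :=
  (abs_le.1 (hr.abs_eq_one n).le).1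

theorem alternate_le_one (hr : IsRudinShapiro r) (n : ℕ) : alternate r n ≤ 1 :=
  (abs_le.1 ((abs_alternate r n).trans (hr.abs_eq_one n)).le).2

theorem neg_one_le_alternate (hr : IsRudinShapiro r) (n : ℕ) : -1 ≤ alternate r n :=
  (abs_le.1 ((abs_alternate r n).trans (hr.abs_eq_one n)).le).1

/-! ### Reversal -/

theorem apply_reflect (hr : IsRudinShapiro r) {k m n : ℕ} (hn : n < 2 ^ k)
    (hnm : n + m + 1 = 2 ^ (k + 1)) : r m = (-1) ^ k * alternate r n := by
  induction k generalizing m n with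
  | zero =>
    obtain rfl : n = 0 := by simpa using hn
    obtain rfl : m = 1 := by omega
    simpa using hr.two_mul_add_one 0
  | succ k ih =>
    rw [pow_succ] at hn hnm
    obtain ⟨q, rfl | rfl⟩ := Nat.even_or_odd' n
    · obtain ⟨p, rfl⟩ : ∃ p, m = 2 * p + 1 := ⟨m / 2, by omega⟩
      have hqp : q + p + 1 = 2 ^ (k + 1) := by omega
      have hsign := neg_one_pow_eq_neg_of_odd_add (odd_add_of_add_add_one_eq_two_pow hqp)
      calc r (2 * p + 1) = (-1) ^ p * r p := hr.two_mul_add_one p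
        _ = (-1) ^ p * ((-1) ^ k * ((-1) ^ q * r q)) := by rw [ih (by omega) hqp, alternate]
        _ = (-1) ^ (k + 1) * ((-1) ^ p * (-1) ^ p) * r q := by rw [hsign]; ring
        _ = (-1) ^ (k + 1) * alternate r (2 * q) := by
          rw [pow_mul_pow_eq_one p (by norm_num), mul_one, hr.alternate_two_mul]
    · obtain ⟨p, rfl⟩ : ∃ p, m = 2 * p := ⟨m / 2, by omega⟩
      rw [hr.two_mul, ih (by omega : q < 2 ^ k) (by omega), hr.alternate_two_mul_add_one]
      ring

theorem prefixesOccurReversed_alternate_left (hr : IsRudinShapiro r) :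
    PrefixesOccurReversed (alternate r) r := by
  intro L
  have hL : L < 2 ^ (2 * L) := by
    calc L ≤ 2 * L := by omega
      _ < 2 ^ (2 * L) := Nat.lt_two_pow_self
  refine ⟨2 ^ (2 * L + 1), by rw [pow_succ]; omega, fun a b ha hab => ?_⟩
  rw [hr.apply_reflect (ha.trans hL) hab, (even_two_mul L).neg_one_pow, one_mul]

theorem prefixesOccurReversed_alternate_right (hr : IsRudinShapiro r) :
    PrefixesOccurReversed r (alternate r) := by
  intro L
  have hL : L < 2 ^ (2 * L + 1) := by
    calc L ≤ 2 * L + 1 := by omega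
      _ < 2 ^ (2 * L + 1) := Nat.lt_two_pow_self
  refine ⟨2 ^ (2 * L + 1 + 1), by rw [pow_succ]; omega, fun a b ha hab => ?_⟩
  have hsign := neg_one_pow_eq_neg_of_odd_add (odd_add_of_add_add_one_eq_two_pow hab)
  calc alternate r b = (-1) ^ b * -((-1) ^ a * r a) := by
        rw [alternate, hr.apply_reflect (ha.trans hL) hab, (odd_two_mul_add_one L).neg_one_pow,
          neg_one_mul, alternate]
    _ = (-1) ^ b * (-1) ^ b * r a := by rw [hsign]; ring
    _ = r a := by rw [pow_mul_pow_eq_one b (by norm_num), one_mul]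

theorem maxSum_alternate_eq (hr : IsRudinShapiro r) {M M' : ℕ → ℤ} (hM : IsMaxSum r M)
    (hM' : IsMaxSum (alternate r) M') (n : ℕ) : M n = M' n :=
  le_antisymm (hM'.le_of_prefixesOccurReversed hM hr.prefixesOccurReversed_alternate_right n)
    (hM.le_of_prefixesOccurReversed hM' hr.prefixesOccurReversed_alternate_left n)

/-! ### Upper bounds -/

theorem prefixSum_four_mul (hr : IsRudinShapiro r) (k : ℕ) :
    prefixSum r (4 * k) = 2 * prefixSum r k := by
  induction k with
  | zero => rfl
  | succ k ih =>
    rw [show 4 * (k + 1) = 4 * k + 3 + 1 by ring]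
    simp only [prefixSum_succ, ih, hr.four_mul, hr.four_mul_add_one, hr.four_mul_add_two,
      hr.four_mul_add_three]
    ring

theorem prefixSum_four_mul_add_one (hr : IsRudinShapiro r) (k : ℕ) :
    prefixSum r (4 * k + 1) = prefixSum r k + prefixSum r (k + 1) := by
  rw [prefixSum_succ, prefixSum_succ, hr.prefixSum_four_mul, hr.four_mul]
  ring

theorem prefixSum_four_mul_add_two (hr : IsRudinShapiro r) (k : ℕ) :
    prefixSum r (4 * k + 2) = 2 * prefixSum r (k + 1) := by
  rw [prefixSum_succ, hr.prefixSum_four_mul_add_one, hr.four_mul_add_one, prefixSum_succ]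
  ring

theorem prefixSum_four_mul_add_three (hr : IsRudinShapiro r) (k : ℕ) :
    prefixSum r (4 * k + 3) = 2 * prefixSum r (k + 1) + alternate r k := by
  rw [prefixSum_succ, hr.prefixSum_four_mul_add_two, hr.four_mul_add_two]

theorem prefixSum_four_mul_add_four (hr : IsRudinShapiro r) (k : ℕ) :
    prefixSum r (4 * k + 4) = 2 * prefixSum r (k + 1) :=
  hr.prefixSum_four_mul (k + 1)

theorem prefixSum_four_mul_add_five (hr : IsRudinShapiro r) (k : ℕ) :
    prefixSum r (4 * k + 5) = prefixSum r (k + 1) + prefixSum r (k + 2) :=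
  hr.prefixSum_four_mul_add_one (k + 1)

theorem prefixSum_four_mul_add_six (hr : IsRudinShapiro r) (k : ℕ) :
    prefixSum r (4 * k + 6) = 2 * prefixSum r (k + 2) :=
  hr.prefixSum_four_mul_add_two (k + 1)

variable {M : ℕ → ℤ}

theorem maxSum_four_mul_le (hr : IsRudinShapiro r) (hM : IsMaxSum r M) (n : ℕ) :
    M (4 * n) ≤ 2 * M n + 2 := by
  have hle {i j : ℕ} (hij : i + n = j) := hM.prefixSum_sub_le hij
  refine hM.le_of_forall_residue_mod_four (fun q => ?_) (fun q => ?_) (fun q => ?_) (fun q => ?_)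
  · rw [show 4 * q + 4 * n = 4 * (q + n) by ring, hr.prefixSum_four_mul, hr.prefixSum_four_mul]
    linarith [hle (i := q) rfl]
  · rw [show 4 * q + 1 + 4 * n = 4 * (q + n) + 1 by ring, hr.prefixSum_four_mul_add_one,
      hr.prefixSum_four_mul_add_one]
    linarith [hle (i := q) rfl, hle (by ring : q + 1 + n = q + n + 1)]
  · rw [show 4 * q + 2 + 4 * n = 4 * (q + n) + 2 by ring, hr.prefixSum_four_mul_add_two,
      hr.prefixSum_four_mul_add_two]
    linarith [hle (by ring : q + 1 + n = q + n + 1)]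
  · rw [show 4 * q + 3 + 4 * n = 4 * (q + n) + 3 by ring, hr.prefixSum_four_mul_add_three,
      hr.prefixSum_four_mul_add_three]
    linarith [hle (by ring : q + 1 + n = q + n + 1), hr.neg_one_le_alternate q,
      hr.alternate_le_one (q + n)]

theorem maxSum_four_mul_add_one_le (hr : IsRudinShapiro r) (hM : IsMaxSum r M) (n : ℕ) :
    M (4 * n + 1) ≤ 2 * M n + 1 := by
  have hle {i j : ℕ} (hij : i + n = j) := hM.prefixSum_sub_le hij
  refine hM.le_of_forall_residue_mod_four (fun q => ?_) (fun q => ?_) (fun q => ?_) (fun q => ?_)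
  · rw [show 4 * q + (4 * n + 1) = 4 * (q + n) + 1 by ring, hr.prefixSum_four_mul_add_one,
      hr.prefixSum_four_mul]
    linarith [hle (i := q) rfl, prefixSum_succ r (q + n), hr.le_one (q + n)]
  · rw [show 4 * q + 1 + (4 * n + 1) = 4 * (q + n) + 2 by ring, hr.prefixSum_four_mul_add_two,
      hr.prefixSum_four_mul_add_one]
    linarith [hle (by ring : q + 1 + n = q + n + 1), prefixSum_succ r q, hr.le_one q]
  · rw [show 4 * q + 2 + (4 * n + 1) = 4 * (q + n) + 3 by ring, hr.prefixSum_four_mul_add_three,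
      hr.prefixSum_four_mul_add_two]
    linarith [hle (by ring : q + 1 + n = q + n + 1), hr.alternate_le_one (q + n)]
  · rw [show 4 * q + 3 + (4 * n + 1) = 4 * (q + n) + 4 by ring, hr.prefixSum_four_mul_add_four,
      hr.prefixSum_four_mul_add_three]
    linarith [hle (by ring : q + 1 + n = q + n + 1), hr.neg_one_le_alternate q]

theorem maxSum_four_mul_add_two_le (hr : IsRudinShapiro r) (hM : IsMaxSum r M) (n : ℕ) :
    M (4 * n + 2) ≤ M n + M (n + 1) + 1 := by
  have hle {i j : ℕ} (hij : i + n = j) := hM.prefixSum_sub_le hij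
  have hle' {i j : ℕ} (hij : i + (n + 1) = j) := hM.prefixSum_sub_le hij
  refine hM.le_of_forall_residue_mod_four (fun q => ?_) (fun q => ?_) (fun q => ?_) (fun q => ?_)
  · rw [show 4 * q + (4 * n + 2) = 4 * (q + n) + 2 by ring, hr.prefixSum_four_mul_add_two,
      hr.prefixSum_four_mul]
    linarith [hle (i := q) rfl, hle' (by ring : q + (n + 1) = q + n + 1),
      prefixSum_succ r (q + n), hr.le_one (q + n)]
  · rw [show 4 * q + 1 + (4 * n + 2) = 4 * (q + n) + 3 by ring, hr.prefixSum_four_mul_add_three,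
      hr.prefixSum_four_mul_add_one]
    linarith [hle (by ring : q + 1 + n = q + n + 1), hle' (by ring : q + (n + 1) = q + n + 1),
      hr.alternate_le_one (q + n)]
  · rw [show 4 * q + 2 + (4 * n + 2) = 4 * (q + n) + 4 by ring, hr.prefixSum_four_mul_add_four,
      hr.prefixSum_four_mul_add_two]
    linarith [hle (by ring : q + 1 + n = q + n + 1), hle' (by ring : q + 1 + (n + 1) = q + n + 2),
      prefixSum_succ r (q + n + 1), hr.neg_one_le (q + n + 1)]
  · rw [show 4 * q + 3 + (4 * n + 2) = 4 * (q + n) + 5 by ring, hr.prefixSum_four_mul_add_five,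
      hr.prefixSum_four_mul_add_three]
    linarith [hle (by ring : q + 1 + n = q + n + 1), hle' (by ring : q + 1 + (n + 1) = q + n + 2),
      hr.neg_one_le_alternate q]

theorem maxSum_four_mul_add_three_le (hr : IsRudinShapiro r) (hM : IsMaxSum r M) (n : ℕ) :
    M (4 * n + 3) ≤ 2 * M (n + 1) + 1 := by
  have hle {i j : ℕ} (hij : i + (n + 1) = j) := hM.prefixSum_sub_le hij
  refine hM.le_of_forall_residue_mod_four (fun q => ?_) (fun q => ?_) (fun q => ?_) (fun q => ?_)
  · rw [show 4 * q + (4 * n + 3) = 4 * (q + n) + 3 by ring, hr.prefixSum_four_mul_add_three,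
      hr.prefixSum_four_mul]
    linarith [hle (by ring : q + (n + 1) = q + n + 1), hr.alternate_le_one (q + n)]
  · rw [show 4 * q + 1 + (4 * n + 3) = 4 * (q + n) + 4 by ring, hr.prefixSum_four_mul_add_four,
      hr.prefixSum_four_mul_add_one]
    linarith [hle (by ring : q + (n + 1) = q + n + 1), prefixSum_succ r q, hr.neg_one_le q]
  · rw [show 4 * q + 2 + (4 * n + 3) = 4 * (q + n) + 5 by ring, hr.prefixSum_four_mul_add_five,
      hr.prefixSum_four_mul_add_two]
    linarith [hle (by ring : q + 1 + (n + 1) = q + n + 2), prefixSum_succ r (q + n + 1),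
      hr.neg_one_le (q + n + 1)]
  · rw [show 4 * q + 3 + (4 * n + 3) = 4 * (q + n) + 6 by ring, hr.prefixSum_four_mul_add_six,
      hr.prefixSum_four_mul_add_three]
    linarith [hle (by ring : q + 1 + (n + 1) = q + n + 2), hr.neg_one_le_alternate q]

end IsRudinShapiro

/-! ### Maximal windows with prescribed boundary values -/

/-- The window `w (i + 1), …, w j` has length `n` and sum `M n`. The window starts at `i + 1`
so that the term `w i` just before it exists. -/
structure IsMaxWindow (w M : ℕ → ℤ) (n i j : ℕ) : Prop where
  length : i + n = j
  sum : prefixSum w (j + 1) - prefixSum w (i + 1) = M n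

/-- Some maximal window of length `n` is preceded by the value `-1` of `r'` and ends with the
value `1` of `r'`; such a window makes the bounds for lengths `4n - 1`, `4n` and
`4n + 1` sharp. -/
def HasBalancedWindow (r M : ℕ → ℤ) (n : ℕ) : Prop :=
  ∃ i j, IsMaxWindow r M n i j ∧ alternate r i = -1 ∧ alternate r j = 1

/-- The maximum increases from length `n` to `n + 1`, and it does so along a maximal window
preceded by the value `-1` of `r'` and extended by one term to the right. -/
def HasRightExtension (r M : ℕ → ℤ) (n : ℕ) : Prop :=
  M (n + 1) = M n + 1 ∧ ∃ i j, IsMaxWindow r M n i j ∧ alternate r i = -1 ∧ r (j + 1) = 1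

/-- The maximum decreases from length `n` to `n + 1`, and it does so along a maximal window
ending with the value `1` of `r'` and extended by one term to the left. -/
def HasLeftExtension (r M : ℕ → ℤ) (n : ℕ) : Prop :=
  M (n + 1) = M n - 1 ∧ ∃ i j, IsMaxWindow r M n i j ∧ r i = -1 ∧ alternate r j = 1

/-- Nested maximal windows of lengths `n` and `n + 1` with suitable boundary values; they make the
bounds for lengths `4n + 1` and `4n + 2` sharp. -/
def HasExtension (r M : ℕ → ℤ) (n : ℕ) : Prop :=
  HasRightExtension r M n ∨ HasLeftExtension r M n

namespace IsRudinShapiro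

variable {r M : ℕ → ℤ} {n : ℕ}

theorem maxSum_four_mul (hr : IsRudinShapiro r) (hM : IsMaxSum r M)
    (h : HasBalancedWindow r M n) : M (4 * n) = 2 * M n + 2 := by
  obtain ⟨i, j, ⟨hlen, hsum⟩, hi, hj⟩ := h
  have hle := hM.prefixSum_sub_le (by omega : 4 * i + 3 + 4 * n = 4 * j + 3)
  rw [hr.prefixSum_four_mul_add_three, hr.prefixSum_four_mul_add_three] at hle
  linarith [hr.maxSum_four_mul_le hM n]

theorem maxSum_four_mul_add_one (hr : IsRudinShapiro r) (hM : IsMaxSum r M) {i j : ℕ}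
    (h : IsMaxWindow r M n i j) (hij : alternate r i = -1 ∨ alternate r j = 1) :
    M (4 * n + 1) = 2 * M n + 1 := by
  obtain ⟨hlen, hsum⟩ := h
  refine le_antisymm (hr.maxSum_four_mul_add_one_le hM n) ?_
  rcases hij with hi | hj
  · have hle := hM.prefixSum_sub_le (by omega : 4 * i + 3 + (4 * n + 1) = 4 * j + 4)
    rw [hr.prefixSum_four_mul_add_four, hr.prefixSum_four_mul_add_three] at hle
    linarith
  · have hle := hM.prefixSum_sub_le (by omega : 4 * i + 2 + (4 * n + 1) = 4 * j + 3)
    rw [hr.prefixSum_four_mul_add_three, hr.prefixSum_four_mul_add_two] at hle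
    linarith

theorem maxSum_four_mul_add_two (hr : IsRudinShapiro r) (hM : IsMaxSum r M)
    (h : HasExtension r M n) : M (4 * n + 2) = M n + M (n + 1) + 1 := by
  refine le_antisymm (hr.maxSum_four_mul_add_two_le hM n) ?_
  rcases h with ⟨hMn, i, j, ⟨hlen, hsum⟩, hi, hj⟩ | ⟨hMn, i, j, ⟨hlen, hsum⟩, hi, hj⟩
  · have hle := hM.prefixSum_sub_le (by omega : 4 * i + 3 + (4 * n + 2) = 4 * j + 5)
    rw [hr.prefixSum_four_mul_add_five, hr.prefixSum_four_mul_add_three] at hle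
    linarith [prefixSum_succ r (j + 1)]
  · have hle := hM.prefixSum_sub_le (by omega : 4 * i + 1 + (4 * n + 2) = 4 * j + 3)
    rw [hr.prefixSum_four_mul_add_three, hr.prefixSum_four_mul_add_one] at hle
    linarith [prefixSum_succ r i]

theorem maxSum_four_mul_add_three (hr : IsRudinShapiro r) (hM : IsMaxSum r M)
    (h : HasBalancedWindow r M (n + 1)) : M (4 * n + 3) = 2 * M (n + 1) + 1 := by
  obtain ⟨i, j, ⟨hlen, hsum⟩, hi, -⟩ := h
  have hle := hM.prefixSum_sub_le (by omega : 4 * i + 3 + (4 * n + 3) = 4 * j + 2)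
  rw [hr.prefixSum_four_mul_add_two, hr.prefixSum_four_mul_add_three] at hle
  linarith [hr.maxSum_four_mul_add_three_le hM n]

theorem hasBalancedWindow_four_mul (hr : IsRudinShapiro r) (hM : IsMaxSum r M)
    (h : HasBalancedWindow r M n) : HasBalancedWindow r M (4 * n) := by
  have hmax := hr.maxSum_four_mul hM h
  obtain ⟨i, j, ⟨hlen, hsum⟩, hi, hj⟩ := h
  refine ⟨4 * i + 2, 4 * j + 2, ⟨by omega, ?_⟩, by rw [hr.alternate_four_mul_add_two, hi],
    by rw [hr.alternate_four_mul_add_two, hj]⟩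
  rw [hr.prefixSum_four_mul_add_three, hr.prefixSum_four_mul_add_three]
  linarith

theorem hasBalancedWindow_four_mul_add_one (hr : IsRudinShapiro r) (hM : IsMaxSum r M)
    (h : HasBalancedWindow r M n) : HasBalancedWindow r M (4 * n + 1) := by
  obtain ⟨i, j, hw, hi, hj⟩ := h
  have ⟨hlen, hsum⟩ := hw
  have hmax := hr.maxSum_four_mul_add_one hM hw (.inl hi)
  refine ⟨4 * i + 2, 4 * j + 3, ⟨by omega, ?_⟩, by rw [hr.alternate_four_mul_add_two, hi],
    by rw [hr.alternate_four_mul_add_three, hj]⟩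
  rw [hr.prefixSum_four_mul_add_four, hr.prefixSum_four_mul_add_three]
  linarith

theorem hasBalancedWindow_four_mul_add_two (hr : IsRudinShapiro r) (hM : IsMaxSum r M)
    (h : HasExtension r M n) : HasBalancedWindow r M (4 * n + 2) := by
  have hmax := hr.maxSum_four_mul_add_two hM h
  rcases h with ⟨hMn, i, j, ⟨hlen, hsum⟩, hi, hj⟩ | ⟨hMn, i, j, ⟨hlen, hsum⟩, hi, hj⟩
  · refine ⟨4 * i + 2, 4 * (j + 1), ⟨by omega, ?_⟩, by rw [hr.alternate_four_mul_add_two, hi],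
      by rw [hr.alternate_four_mul, hj]⟩
    rw [hr.prefixSum_four_mul_add_one, hr.prefixSum_four_mul_add_three]
    linarith [prefixSum_succ r (j + 1)]
  · refine ⟨4 * i, 4 * j + 2, ⟨by omega, ?_⟩, by rw [hr.alternate_four_mul, hi],
      by rw [hr.alternate_four_mul_add_two, hj]⟩
    rw [hr.prefixSum_four_mul_add_three, hr.prefixSum_four_mul_add_one]
    linarith [prefixSum_succ r i]

theorem hasBalancedWindow_four_mul_add_three (hr : IsRudinShapiro r) (hM : IsMaxSum r M)
    (h : HasBalancedWindow r M (n + 1)) : HasBalancedWindow r M (4 * n + 3) := by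
  have hmax := hr.maxSum_four_mul_add_three hM h
  obtain ⟨i, j, ⟨hlen, hsum⟩, hi, hj⟩ := h
  refine ⟨4 * i + 3, 4 * j + 2, ⟨by omega, ?_⟩, by rw [hr.alternate_four_mul_add_three, hi],
    by rw [hr.alternate_four_mul_add_two, hj]⟩
  rw [hr.prefixSum_four_mul_add_three, hr.prefixSum_four_mul_add_four]
  linarith

theorem hasExtension_four_mul (hr : IsRudinShapiro r) (hM : IsMaxSum r M)
    (h : HasBalancedWindow r M n) : HasExtension r M (4 * n) := by
  have hmax := hr.maxSum_four_mul hM h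
  obtain ⟨i, j, hw, hi, hj⟩ := h
  have ⟨hlen, hsum⟩ := hw
  have hmax' := hr.maxSum_four_mul_add_one hM hw (.inl hi)
  refine .inr ⟨by linarith, 4 * i + 2, 4 * j + 2, ⟨by omega, ?_⟩,
    by rw [hr.four_mul_add_two, hi], by rw [hr.alternate_four_mul_add_two, hj]⟩
  rw [hr.prefixSum_four_mul_add_three, hr.prefixSum_four_mul_add_three]
  linarith

theorem hasExtension_four_mul_add_one (hr : IsRudinShapiro r) (hM : IsMaxSum r M)
    (h : HasExtension r M n) : HasExtension r M (4 * n + 1) := by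
  have hmax' := hr.maxSum_four_mul_add_two hM h
  rcases h with ⟨hMn, i, j, hw, hi, hj⟩ | ⟨hMn, i, j, hw, hi, hj⟩ <;> have ⟨hlen, hsum⟩ := hw
  · have hmax := hr.maxSum_four_mul_add_one hM hw (.inl hi)
    refine .inl ⟨by linarith, 4 * i + 2, 4 * j + 3, ⟨by omega, ?_⟩,
      by rw [hr.alternate_four_mul_add_two, hi], (hr.four_mul (j + 1)).trans hj⟩
    rw [hr.prefixSum_four_mul_add_four, hr.prefixSum_four_mul_add_three]
    linarith
  · have hmax := hr.maxSum_four_mul_add_one hM hw (.inr hj)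
    refine .inr ⟨by linarith, 4 * i + 1, 4 * j + 2, ⟨by omega, ?_⟩,
      by rw [hr.four_mul_add_one, hi], by rw [hr.alternate_four_mul_add_two, hj]⟩
    rw [hr.prefixSum_four_mul_add_three, hr.prefixSum_four_mul_add_two]
    linarith

theorem hasExtension_four_mul_add_two (hr : IsRudinShapiro r) (hM : IsMaxSum r M)
    (h : HasExtension r M n) (h' : HasBalancedWindow r M (n + 1)) :
    HasExtension r M (4 * n + 2) := by
  have hmax := hr.maxSum_four_mul_add_two hM h
  have hmax' := hr.maxSum_four_mul_add_three hM h'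
  rcases h with ⟨hMn, i, j, ⟨hlen, hsum⟩, hi, hj⟩ | ⟨hMn, i, j, ⟨hlen, hsum⟩, hi, hj⟩
  · refine .inl ⟨by linarith, 4 * i + 2, 4 * (j + 1), ⟨by omega, ?_⟩,
      by rw [hr.alternate_four_mul_add_two, hi], by rw [hr.four_mul_add_one, hj]⟩
    rw [hr.prefixSum_four_mul_add_one, hr.prefixSum_four_mul_add_three]
    linarith [prefixSum_succ r (j + 1)]
  · refine .inr ⟨by linarith, 4 * i, 4 * j + 2, ⟨by omega, ?_⟩,
      by rw [hr.four_mul, hi], by rw [hr.alternate_four_mul_add_two, hj]⟩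
    rw [hr.prefixSum_four_mul_add_three, hr.prefixSum_four_mul_add_one]
    linarith [prefixSum_succ r i]

theorem hasExtension_four_mul_add_three (hr : IsRudinShapiro r) (hM : IsMaxSum r M)
    (h : HasBalancedWindow r M (n + 1)) : HasExtension r M (4 * n + 3) := by
  have hmax := hr.maxSum_four_mul_add_three hM h
  have hmax' : M (4 * n + 3 + 1) = 2 * M (n + 1) + 2 := hr.maxSum_four_mul hM h
  obtain ⟨i, j, ⟨hlen, hsum⟩, hi, hj⟩ := h
  refine .inl ⟨by linarith, 4 * i + 2, 4 * j + 1, ⟨by omega, ?_⟩,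
    by rw [hr.alternate_four_mul_add_two, hi], by rw [hr.four_mul_add_two, hj]⟩
  rw [hr.prefixSum_four_mul_add_two, hr.prefixSum_four_mul_add_three]
  linarith

/-! ### All lengths -/

theorem apply_one (hr : IsRudinShapiro r) : r 1 = 1 :=
  (hr.four_mul_add_one 0).trans hr.zero

theorem alternate_one (hr : IsRudinShapiro r) : alternate r 1 = -1 := by
  rw [alternate, hr.apply_one, pow_one, mul_one]

theorem apply_two (hr : IsRudinShapiro r) : r 2 = 1 :=
  (hr.two_mul 1).trans hr.apply_one

theorem maxSum_one (hr : IsRudinShapiro r) (hM : IsMaxSum r M) : M 1 = 1 :=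
  hM.map_one hr.le_one hr.zero

theorem hasBalancedWindow_one (hr : IsRudinShapiro r) (hM : IsMaxSum r M) :
    HasBalancedWindow r M 1 := by
  refine ⟨1, 2, ⟨rfl, ?_⟩, hr.alternate_one, ?_⟩
  · rw [prefixSum_succ, add_sub_cancel_left, hr.apply_two, hr.maxSum_one hM]
  · rw [alternate, hr.apply_two, neg_one_sq, mul_one]

theorem hasExtension_zero (hr : IsRudinShapiro r) (hM : IsMaxSum r M) : HasExtension r M 0 := by
  refine .inl ⟨?_, 6, 6, ⟨rfl, ?_⟩, ?_, ?_⟩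
  · rw [hM.map_zero, hr.maxSum_one hM, zero_add]
  · rw [hM.map_zero, sub_self]
  · exact (hr.alternate_four_mul_add_two 1).trans hr.alternate_one
  · exact (hr.four_mul_add_three 1).trans (by rw [hr.alternate_one, neg_neg])

theorem hasExtension_and_hasBalancedWindow_succ (hr : IsRudinShapiro r) (hM : IsMaxSum r M)
    (n : ℕ) : HasExtension r M n ∧ HasBalancedWindow r M (n + 1) := by
  induction n using Nat.strong_induction_on with
  | _ n ih =>
    obtain rfl | ⟨m, hm⟩ : n = 0 ∨ ∃ m, n = 4 * m + 1 ∨ n = 4 * m + 2 ∨ n = 4 * m + 3 ∨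
        n = 4 * (m + 1) := n.eq_zero_or_pos.imp_right fun hn => ⟨(n - 1) / 4, by omega⟩
    · exact ⟨hr.hasExtension_zero hM, hr.hasBalancedWindow_one hM⟩
    · obtain ⟨hext, hbal⟩ := ih m (by omega)
      rcases hm with rfl | rfl | rfl | rfl
      · exact ⟨hr.hasExtension_four_mul_add_one hM hext,
          hr.hasBalancedWindow_four_mul_add_two hM hext⟩
      · exact ⟨hr.hasExtension_four_mul_add_two hM hext hbal,
          hr.hasBalancedWindow_four_mul_add_three hM hbal⟩
      · exact ⟨hr.hasExtension_four_mul_add_three hM hbal,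
          hr.hasBalancedWindow_four_mul hM hbal⟩
      · exact ⟨hr.hasExtension_four_mul hM hbal,
          hr.hasBalancedWindow_four_mul_add_one hM hbal⟩

theorem hasExtension (hr : IsRudinShapiro r) (hM : IsMaxSum r M) (n : ℕ) : HasExtension r M n :=
  (hr.hasExtension_and_hasBalancedWindow_succ hM n).1

theorem hasBalancedWindow (hr : IsRudinShapiro r) (hM : IsMaxSum r M) (hn : 1 ≤ n) :
    HasBalancedWindow r M n := by
  have h := (hr.hasExtension_and_hasBalancedWindow_succ hM (n - 1)).2
  rwa [Nat.sub_add_cancel hn] at h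

end IsRudinShapiro

/-- For every `n ≥ 1`, `M_r(n) = M_{r'}(n)` (their common
value is denoted `M(n)`); moreover `M(1) = 1`, `M(2) = 2`, `M(3) = 3`, and
for `n ≥ 1`: `M(4n) = 2M(n) + 2`, `M(4n+1) = 2M(n) + 1`,
`M(4n+2) = M(n) + M(n+1) + 1`, `M(4n+3) = 2M(n+1) + 1`. -/
theorem max_sum_recurrences
    (r : ℕ → ℤ) (hr0 : r 0 = 1)
    (hre : ∀ n, r (2 * n) = r n)
    (hro : ∀ n, r (2 * n + 1) = (-1) ^ n * r n)
    (M M' : ℕ → ℤ)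
    (hM : ∀ n, IsGreatest (Set.range fun i => pSum r i n) (M n))
    (hM' : ∀ n, IsGreatest (Set.range fun i => pSum (fun k => (-1) ^ k * r k) i n) (M' n)) :
    (∀ n, 1 ≤ n → M n = M' n) ∧
    M 1 = 1 ∧ M 2 = 2 ∧ M 3 = 3 ∧
    (∀ n, 1 ≤ n →
      M (4 * n) = 2 * M n + 2 ∧
      M (4 * n + 1) = 2 * M n + 1 ∧
      M (4 * n + 2) = M n + M (n + 1) + 1 ∧
      M (4 * n + 3) = 2 * M (n + 1) + 1) := by
  have hr : IsRudinShapiro r := ⟨hr0, hre, hro⟩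
  have hM₁ := hr.maxSum_one hM
  have hM₂ := hr.maxSum_four_mul_add_two hM (hr.hasExtension hM 0)
  have hM₃ := hr.maxSum_four_mul_add_three hM (hr.hasBalancedWindow hM le_rfl)
  refine ⟨fun n _ => hr.maxSum_alternate_eq hM hM' n, hM₁, ?_, ?_, fun n hn => ?_⟩
  · simpa [hM₁, IsMaxSum.map_zero hM] using hM₂
  · simpa [hM₁] using hM₃
  · have hbal := hr.hasBalancedWindow hM hn
    have ⟨_, _, hw, hi, _⟩ := hbal
    exact ⟨hr.maxSum_four_mul hM hbal, hr.maxSum_four_mul_add_one hM hw (.inl hi),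
      hr.maxSum_four_mul_add_two hM (hr.hasExtension hM n),
      hr.maxSum_four_mul_add_three hM (hr.hasBalancedWindow hM (Nat.le_add_left 1 n))⟩
end
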